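/- arXiv:1411.3432 — 2 statements merged into one kernel-verified Lean document; each statement's English description precedes it below -/
import Mathlib

section
/- Let P be a nonempty subset of {1,...,n} and let φ be a P-isometry of C_n. Then at least one of the following holds: φ is an isometry; φ is an even isometry; φ is an {n}-isometry; n is even and φ is an {n/2, n}-isometry; n is odd and φ is an {(n+1)/2}-isometry; n is odd and φ is an {(n−1)/2, (n+1)/2, n}-isometry. -/
/-!
It suffices that `φ` preserves a single distance `p`; write `n = p + q`. As `φ` is a permutation
of a finite set, it also reflects distance `p`, hence preserves the number of words at distance `p`
from both `x` and `y`. If `x` and `y` are at distance `2k`, this number is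
`C(2k, k) * C(n - 2k, p - k)`; it vanishes at odd distances.

* If `|p - q| ≥ 2`, its maximum over `1 ≤ k ≤ min p q` is attained at `k = 1` only, so `φ` preserves
  distance `2`. The words at even distance are joined by paths with steps of length `2`, and so
  `φ` preserves all even distances.
* If `q = p + 1`, it is proportional to `centralBinom k * centralBinom (p + 1 - k)`, whose maximum
  over `1 ≤ k ≤ p` is attained at `k = 1` and `k = p`. So `φ` preserves the graph in which words at
  distance `2` or `2p` are adjacent, where words at distance `2k` have graph distance
  `min k (p + 1 - k)`. When `p` is even, this separates `{p, p + 2}` from all other distances, and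
  the case above applies to `p + 2`. When `p` is odd, it isolates the distance `p + 1`; moreover,
  `x` and `y` are antipodal if and only if all words at distance `p` from `x` are at distance
  `p + 1` from `y`.
* If `q = p - 1` or `q = 0`, there is nothing to prove.
* If `q = p`, it is `centralBinom k * centralBinom (p - k)`, which attains its maximum over
  `0 ≤ k ≤ p` at `k = 0` and `k = p` only, so `φ` preserves antipodal pairs.
-/

open Finset
open scoped symmDiff

namespace BooleanCube

section Preserves

variable {V : Type*} {φ : Equiv.Perm V} {r s : V → V → Prop}

/-- The permutation `φ` is an automorphism of the relation `r`: it preserves and reflects it. -/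
def Preserves (φ : Equiv.Perm V) (r : V → V → Prop) : Prop :=
  ∀ x y, r (φ x) (φ y) ↔ r x y

lemma Preserves.of_forall_imp [Finite V] (h : ∀ x y, r x y → r (φ x) (φ y)) :
    Preserves φ r := by
  intro x y
  let f : V × V → V × V := Prod.map φ φ
  have hf : f.Injective := φ.injective.prodMap φ.injective
  let pairs : Set (V × V) := {z | r z.1 z.2}
  have hmaps : pairs.MapsTo f pairs := fun z hz => h z.1 z.2 hz
  have hbij : pairs.BijOn f pairs :=
    (pairs.toFinite.injOn_iff_bijOn_of_mapsTo hmaps).1 hf.injOn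
  refine ⟨fun hxy => ?_, h x y⟩
  have hmem : f (x, y) ∈ f '' pairs := hbij.surjOn hxy
  exact (hf.mem_set_image).1 hmem

lemma Preserves.congr (hr : Preserves φ r) (h : ∀ x y, s x y ↔ r x y) : Preserves φ s :=
  fun x y => by rw [h, h, hr]

lemma preserves_eq (φ : Equiv.Perm V) : Preserves φ Eq :=
  fun _ _ => φ.apply_eq_iff_eq

lemma Preserves.comp (hr : Preserves φ r) (hs : Preserves φ s) :
    Preserves φ (Relation.Comp r s) := by
  intro x y
  constructor
  · rintro ⟨w, hxw, hwy⟩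
    obtain ⟨z, rfl⟩ := φ.surjective w
    exact ⟨z, (hr x z).1 hxw, (hs z y).1 hwy⟩
  · rintro ⟨z, hxz, hzy⟩
    exact ⟨φ z, (hr x z).2 hxz, (hs z y).2 hzy⟩

lemma Preserves.of_comp_one {b : ℕ → V → V → Prop} (h_zero : ∀ x y, b 0 x y ↔ x = y)
    (h_succ : ∀ k x y, b (k + 1) x y ↔ Relation.Comp (b k) (b 1) x y)
    (h_one : Preserves φ (b 1)) (k : ℕ) : Preserves φ (b k) := by
  induction k with
  | zero => exact (preserves_eq φ).congr h_zero
  | succ k ih => exact (ih.comp h_one).congr (h_succ k)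

end Preserves

lemma card_filter_card_inter_card_sdiff {ι : Type*} [Fintype ι] [DecidableEq ι]
    (D : Finset ι) (k a : ℕ) :
    #{S : Finset ι | #(S ∩ D) = k ∧ #(S \ D) = a} =
      (#D).choose k * (Fintype.card ι - #D).choose a := by
  have hsplit : ∀ {A B : Finset ι}, A ⊆ D → B ⊆ Dᶜ → (A ∪ B) ∩ D = A ∧ (A ∪ B) \ D = B := by
    intro A B hA hB
    have hdisj : Disjoint B D := by rwa [← subset_compl_iff_disjoint_right]
    rw [union_inter_distrib_right, union_sdiff_distrib, inter_eq_left.2 hA,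
      disjoint_iff_inter_eq_empty.1 hdisj, sdiff_eq_empty_iff_subset.2 hA,
      sdiff_eq_self_of_disjoint hdisj, union_empty, empty_union]
    exact ⟨rfl, rfl⟩
  rw [← card_compl, ← card_powersetCard, ← card_powersetCard, ← card_product]
  refine card_nbij' (fun S => (S ∩ D, S \ D)) (fun T => T.1 ∪ T.2) ?_ ?_ ?_ ?_
  · intro S hS
    have hsub : S \ D ⊆ Dᶜ := fun i hi => by simp_all
    simpa [mem_powersetCard, hsub] using hS
  · rintro ⟨A, B⟩ hAB
    simp only [coe_product, Set.mem_prod, mem_coe, mem_powersetCard] at hAB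
    obtain ⟨⟨hA, hAk⟩, hB, hBa⟩ := hAB
    simp [hsplit hA hB, hAk, hBa]
  · intro S _
    exact (union_comm _ _).trans (sdiff_union_inter S D)
  · rintro ⟨A, B⟩ hAB
    simp only [coe_product, Set.mem_prod, mem_coe, mem_powersetCard] at hAB
    simp [hsplit hAB.1.1 hAB.2.1]

section PairCount

open Nat

lemma centralBinom_succ_mul_lt {i j : ℕ} (h : i < j) :
    centralBinom (i + 1) * centralBinom j < centralBinom i * centralBinom (j + 1) := by
  refine lt_of_mul_lt_mul_left (a := (i + 1) * (j + 1)) ?_ (Nat.zero_le _)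
  calc (i + 1) * (j + 1) * (centralBinom (i + 1) * centralBinom j)
      = ((i + 1) * centralBinom (i + 1)) * ((j + 1) * centralBinom j) := by ring
    _ = (2 * (2 * i + 1) * (j + 1)) * (centralBinom i * centralBinom j) := by
        rw [succ_mul_centralBinom_succ]; ring
    _ < (2 * (2 * j + 1) * (i + 1)) * (centralBinom i * centralBinom j) := by
        refine Nat.mul_lt_mul_of_pos_right ?_ (Nat.mul_pos i.centralBinom_pos j.centralBinom_pos)
        nlinarith
    _ = ((i + 1) * centralBinom i) * ((j + 1) * centralBinom (j + 1)) := by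
        rw [succ_mul_centralBinom_succ]; ring
    _ = (i + 1) * (j + 1) * (centralBinom i * centralBinom (j + 1)) := by ring

lemma centralBinom_add_mul_centralBinom_add_lt (a : ℕ) {s t : ℕ} (hs : s ≠ 0) (ht : t ≠ 0) :
    centralBinom (a + s) * centralBinom (a + t) < centralBinom a * centralBinom (a + s + t) := by
  wlog hst : s ≤ t generalizing s t
  · have := this ht hs (by omega)
    rwa [mul_comm, Nat.add_right_comm]
  obtain ⟨s, rfl⟩ := Nat.exists_eq_add_one_of_ne_zero hs
  clear hs
  induction s generalizing t with
  | zero => simpa [add_right_comm] using centralBinom_succ_mul_lt (i := a) (j := a + t) (by omega)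
  | succ s ih =>
    calc centralBinom (a + (s + 1) + 1) * centralBinom (a + t)
        < centralBinom (a + (s + 1)) * centralBinom (a + (t + 1)) :=
          centralBinom_succ_mul_lt (by omega)
      _ < centralBinom a * centralBinom (a + (s + 1) + (t + 1)) := ih (by omega) (by omega)
      _ = centralBinom a * centralBinom (a + (s + 1 + 1) + t) := by congr 2; omega

lemma centralBinom_mul_centralBinom_lt {s t : ℕ} (hs : s ≠ 0) (ht : t ≠ 0) :
    centralBinom s * centralBinom t < centralBinom (s + t) := by
  simpa using centralBinom_add_mul_centralBinom_add_lt 0 hs ht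

/-- The number of common neighbours at distance `p` of two words at distance `2 * k` in the cube of
dimension `p + q`, in terms of `a = p - k` and `b = q - k` in order to avoid subtraction. -/
def pairCount (k a b : ℕ) : ℕ :=
  centralBinom k * (a + b).choose a

lemma pairCount_pos (k a b : ℕ) : 0 < pairCount k a b :=
  Nat.mul_pos k.centralBinom_pos (choose_pos (by omega))

lemma pairCount_comm (k a b : ℕ) : pairCount k a b = pairCount k b a := by
  rw [pairCount, pairCount, add_comm b a, choose_symm_add]

lemma pairCount_self (k a : ℕ) : pairCount k a a = centralBinom k * centralBinom a := by
  rw [pairCount, ← two_mul, centralBinom_eq_two_mul_choose a]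

lemma two_mul_pairCount_succ (k a : ℕ) :
    2 * pairCount k a (a + 1) = centralBinom k * centralBinom (a + 1) := by
  rw [pairCount, centralBinom_eq_two_mul_choose (a + 1), show 2 * (a + 1) = 2 * a + 1 + 1 by ring,
    choose_succ_succ, choose_symm_half, ← add_assoc, ← two_mul]
  ring

lemma succ_mul_pairCount_succ (k a b : ℕ) :
    (b + 1) * pairCount k a (b + 1) = (a + b + 1) * pairCount k a b := by
  have hchoose : (b + 1) * (a + (b + 1)).choose a = (a + b + 1) * (a + b).choose a := by
    rw [choose_symm_add, choose_symm_add, add_one_mul_choose_eq, mul_comm, add_assoc]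
  rw [pairCount, pairCount, mul_left_comm, hchoose, mul_left_comm]

lemma pairCount_succ_lt_pairCount_one {c a : ℕ} (hc : c ≠ 0) (ha : a ≠ 0) :
    pairCount (c + 1) a (a + 1) < pairCount 1 (a + c) (a + c + 1) := by
  have hlt := centralBinom_add_mul_centralBinom_add_lt 1 hc ha
  rw [add_comm 1 c, add_comm 1 a, show c + 1 + a = a + c + 1 by ring] at hlt
  have := two_mul_pairCount_succ (c + 1) a
  have := two_mul_pairCount_succ 1 (a + c)
  omega

lemma pairCount_succ_zero_one (c : ℕ) : pairCount (c + 1) 0 1 = pairCount 1 c (c + 1) := by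
  have h := two_mul_pairCount_succ 1 c
  rw [mul_comm (centralBinom 1)] at h
  have := two_mul_pairCount_succ (c + 1) 0
  rw [zero_add] at this
  omega

lemma pairCount_lt_pairCount_zero {k : ℕ} (hk : k ≠ 0) (a : ℕ) :
    pairCount k a (a + 1) < pairCount 0 (a + k) (a + k + 1) := by
  have hlt := centralBinom_mul_centralBinom_lt hk a.succ_ne_zero
  rw [show k + (a + 1) = a + k + 1 by ring] at hlt
  have := two_mul_pairCount_succ k a
  have := two_mul_pairCount_succ 0 (a + k)
  rw [centralBinom_zero, one_mul] at this
  rw [Nat.succ_eq_add_one] at hlt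
  omega

/-- The ratio `pairCount k a (b + 1) / pairCount k a b = 1 + a / (b + 1)` gets larger when `a` and
`b` are increased by the same amount, as long as `a ≤ b`. -/
lemma pairCount_succ_lt_of_le {c a b : ℕ} (hc : c ≠ 0) (hab : a ≤ b)
    (h : pairCount (c + 1) a b ≤ pairCount 1 (a + c) (b + c)) :
    pairCount (c + 1) a (b + 1) < pairCount 1 (a + c) (b + 1 + c) := by
  have hratio : (b + c + 1) * (a + b + 1) < (b + 1) * (a + c + (b + c) + 1) := by
    have := Nat.pos_of_ne_zero hc
    nlinarith
  refine lt_of_mul_lt_mul_left (a := (b + 1) * (b + c + 1)) ?_ (Nat.zero_le _)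
  calc (b + 1) * (b + c + 1) * pairCount (c + 1) a (b + 1)
      = (b + c + 1) * ((b + 1) * pairCount (c + 1) a (b + 1)) := by ring
    _ = (b + c + 1) * (a + b + 1) * pairCount (c + 1) a b := by
        rw [succ_mul_pairCount_succ]; ring
    _ ≤ (b + c + 1) * (a + b + 1) * pairCount 1 (a + c) (b + c) := Nat.mul_le_mul_left _ h
    _ < (b + 1) * (a + c + (b + c) + 1) * pairCount 1 (a + c) (b + c) :=
        Nat.mul_lt_mul_of_pos_right hratio (pairCount_pos ..)
    _ = (b + 1) * ((b + c + 1) * pairCount 1 (a + c) (b + c + 1)) := by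
        rw [succ_mul_pairCount_succ]; ring
    _ = (b + 1) * (b + c + 1) * pairCount 1 (a + c) (b + 1 + c) := by
        rw [add_right_comm b 1 c]; ring

lemma pairCount_lt_pairCount_one {c a b : ℕ} (hc : c ≠ 0) (hab : a + 2 ≤ b ∨ b + 2 ≤ a) :
    pairCount (c + 1) a b < pairCount 1 (a + c) (b + c) := by
  wlog h : a + 2 ≤ b generalizing a b
  · rw [pairCount_comm (c + 1), pairCount_comm 1]
    exact this hab.symm (by omega)
  induction b, h using Nat.le_induction with
  | base =>
    refine pairCount_succ_lt_of_le hc (by omega) ?_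
    rw [add_right_comm a 1 c]
    rcases eq_or_ne a 0 with rfl | ha
    · simpa using (pairCount_succ_zero_one c).le
    · exact (pairCount_succ_lt_pairCount_one hc ha).le
  | succ b h ih => exact pairCount_succ_lt_of_le hc (by omega) (ih (.inl h)).le

end PairCount

variable {ι : Type*} [Fintype ι]

section DiffSet

/-- The set of coordinates in which `x` and `y` differ, so that `#(diffSet x y)` is
`hammingDist x y` by definition. -/
def diffSet (x y : ι → ZMod 2) : Finset ι :=
  {i | x i ≠ y i}

@[simp]
lemma mem_diffSet {x y : ι → ZMod 2} {i : ι} : i ∈ diffSet x y ↔ x i ≠ y i := by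
  simp [diffSet]

lemma card_diffSet (x y : ι → ZMod 2) : #(diffSet x y) = hammingDist x y := rfl

variable [DecidableEq ι]

lemma diffSet_symmDiff_diffSet (x y z : ι → ZMod 2) :
    diffSet x y ∆ diffSet y z = diffSet x z := by
  have hne : ∀ a b c : ZMod 2, (a ≠ b ∧ ¬ b ≠ c ∨ b ≠ c ∧ ¬ a ≠ b) ↔ a ≠ c := by decide
  ext i
  simp only [mem_symmDiff, mem_diffSet, hne]

/-- The identification of the cube with the sets of coordinates, with `x` as origin. -/
def diffSetEquiv (x : ι → ZMod 2) : (ι → ZMod 2) ≃ Finset ι where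
  toFun := diffSet x
  invFun S i := if i ∈ S then x i + 1 else x i
  left_inv z := by
    have hadd : ∀ a b : ZMod 2, a ≠ b → a + 1 = b := by decide
    ext i
    by_cases h : x i = z i <;> simp [h, hadd (x i) (z i)]
  right_inv S := by
    ext i
    by_cases h : i ∈ S <;> simp [h]

lemma hammingDist_add_add_eq_two_mul_card_union (x y z : ι → ZMod 2) :
    hammingDist x y + hammingDist y z + hammingDist x z =
      2 * #(diffSet x y ∪ diffSet y z) := by
  rw [← card_diffSet, ← card_diffSet, ← card_diffSet, ← diffSet_symmDiff_diffSet x y z,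
    ← card_union_add_card_inter, symmDiff_eq_sup_sdiff_inf, sup_eq_union, inf_eq_inter,
    card_sdiff_of_subset inter_subset_union]
  have := card_le_card (inter_subset_union (s := diffSet x y) (t := diffSet y z))
  omega

end DiffSet

section Distance

lemma hammingDist_add_one (x y : ι → ZMod 2) :
    hammingDist x (y + 1) + hammingDist x y = Fintype.card ι := by
  have hne : ∀ a b : ZMod 2, a ≠ b + 1 ↔ ¬ a ≠ b := by decide
  simp only [hammingDist, Pi.add_apply, Pi.one_apply, hne]
  rw [add_comm, card_filter_add_card_filter_not, Finset.card_univ]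

lemma exists_hammingDist_add_add_eq_two_mul (x y z : ι → ZMod 2) :
    ∃ t ≤ Fintype.card ι, hammingDist x y + hammingDist y z + hammingDist x z = 2 * t := by
  classical
  exact ⟨_, card_le_univ _, hammingDist_add_add_eq_two_mul_card_union x y z⟩

lemma exists_hammingDist_add_eq {x y : ι → ZMod 2} {m : ℕ} (h : m ≤ hammingDist x y) :
    ∃ z, hammingDist x z + m = hammingDist x y ∧ hammingDist z y = m := by
  classical
  obtain ⟨S, hS, rfl⟩ := exists_subset_card_eq h
  change S ⊆ diffSet x y at hS
  obtain ⟨z, hz : diffSet y z = S⟩ := (diffSetEquiv y).surjective S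
  refine ⟨z, ?_, by rw [hammingDist_comm, ← card_diffSet, hz]⟩
  rw [← card_diffSet, ← diffSet_symmDiff_diffSet x y z, hz, symmDiff_of_ge hS,
    card_sdiff_add_card_eq_card hS, card_diffSet]

lemma exists_hammingDist_eq_add {x y : ι → ZMod 2} {m : ℕ}
    (h : hammingDist x y + m ≤ Fintype.card ι) :
    ∃ z, hammingDist x z = hammingDist x y + m ∧ hammingDist z y = m := by
  have hanti := hammingDist_add_one x y
  obtain ⟨w, hxw, hwy⟩ := exists_hammingDist_add_eq (x := x) (y := y + 1) (m := m) (by omega)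
  refine ⟨w + 1, ?_, ?_⟩
  · have := hammingDist_add_one x w
    omega
  · have := hammingDist_add_one w y
    have := hammingDist_add_one y w
    rw [hammingDist_comm _ y]
    rw [hammingDist_comm y w] at this
    omega

end Distance

section CommonNbrs

variable [DecidableEq ι] {x y : ι → ZMod 2} {p k a b : ℕ}

/-- The words at distance `p` from both `x` and `y`, i.e. the common neighbours of `x` and `y` in
the distance-`p` graph of the cube. -/
def commonNbrs (p : ℕ) (x y : ι → ZMod 2) : Finset (ι → ZMod 2) :=
  {z | hammingDist x z = p ∧ hammingDist y z = p}

@[simp]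
lemma mem_commonNbrs {z : ι → ZMod 2} :
    z ∈ commonNbrs p x y ↔ hammingDist x z = p ∧ hammingDist y z = p := by
  simp [commonNbrs]

lemma card_commonNbrs (hd : hammingDist x y = 2 * k) (hp : p = k + a)
    (hn : Fintype.card ι = 2 * k + a + b) : #(commonNbrs p x y) = pairCount k a b := by
  have hD : #(diffSet y x) = 2 * k := by rw [card_diffSet, hammingDist_comm, hd]
  have hcard : #(commonNbrs p x y) =
      #{S : Finset ι | #(S ∩ diffSet y x) = k ∧ #(S \ diffSet y x) = a} := by
    refine card_equiv (diffSetEquiv x) fun z => ?_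
    have hunion := hammingDist_add_add_eq_two_mul_card_union y x z
    have hinter := card_union_add_card_inter (diffSet y x) (diffSet x z)
    have hsdiff := card_inter_add_card_sdiff (diffSet x z) (diffSet y x)
    rw [inter_comm] at hsdiff
    simp only [mem_commonNbrs, mem_filter_univ, diffSetEquiv, Equiv.coe_fn_mk,
      inter_comm (diffSet x z)]
    rw [← card_diffSet y x, ← card_diffSet x z] at hunion
    rw [← card_diffSet x z]
    omega
  rw [hcard, card_filter_card_inter_card_sdiff, hD, pairCount, Nat.centralBinom_eq_two_mul_choose,
    show Fintype.card ι - 2 * k = a + b by omega]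

lemma exists_of_card_commonNbrs_pos (h : 0 < #(commonNbrs p x y)) :
    ∃ k a b, hammingDist x y = 2 * k ∧ p = k + a ∧ Fintype.card ι = 2 * k + a + b ∧
      #(commonNbrs p x y) = pairCount k a b := by
  obtain ⟨z, hz⟩ := card_pos.1 h
  obtain ⟨hxz, hyz⟩ := mem_commonNbrs.1 hz
  obtain ⟨t, ht, hsum⟩ := exists_hammingDist_add_add_eq_two_mul x z y
  have htri := hammingDist_triangle x z y
  rw [hammingDist_comm z y] at hsum htri
  have hd : hammingDist x y = 2 * (t - p) := by omega
  have hp : p = t - p + (2 * p - t) := by omega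
  have hn : Fintype.card ι = 2 * (t - p) + (2 * p - t) + (Fintype.card ι - t) := by omega
  exact ⟨_, _, _, hd, hp, hn, card_commonNbrs hd hp hn⟩

lemma hammingDist_eq_two_iff (hn : Fintype.card ι = a + b + 2) (hab : a + 2 ≤ b ∨ b + 2 ≤ a) :
    hammingDist x y = 2 ↔ x ≠ y ∧ #(commonNbrs (a + 1) x y) = pairCount 1 a b := by
  refine ⟨fun hd => ⟨?_, card_commonNbrs hd (by omega) (by omega)⟩, fun ⟨hne, hcard⟩ => ?_⟩
  · rw [← hammingDist_ne_zero]
    omega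
  have hpos : 0 < #(commonNbrs (a + 1) x y) := hcard ▸ pairCount_pos ..
  obtain ⟨k, a', b', hd, hp, hn', hcard'⟩ := exists_of_card_commonNbrs_pos hpos
  have hk : k ≠ 0 := fun hk => hne (hammingDist_eq_zero.1 (by omega))
  obtain ⟨c, rfl⟩ := Nat.exists_eq_add_one_of_ne_zero hk
  obtain rfl : a = a' + c := by omega
  obtain rfl : b = b' + c := by omega
  by_contra hd2
  have := pairCount_lt_pairCount_one (a := a') (b := b') (c := c) (by omega) (by omega)
  omega

lemma hammingDist_eq_card_iff (hn : Fintype.card ι = 2 * p) (hp : p ≠ 0) :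
    hammingDist x y = 2 * p ↔ x ≠ y ∧ #(commonNbrs p x y) = p.centralBinom := by
  constructor
  · intro hd
    have hcard := card_commonNbrs (p := p) (a := 0) (b := 0) hd (by omega) (by omega)
    rw [pairCount_self, Nat.centralBinom_zero, mul_one] at hcard
    refine ⟨?_, hcard⟩
    rw [← hammingDist_ne_zero]
    omega
  · rintro ⟨hne, hcard⟩
    have hpos : 0 < #(commonNbrs p x y) := hcard ▸ p.centralBinom_pos
    obtain ⟨k, a, b, hd, hp, hn', hcard'⟩ := exists_of_card_commonNbrs_pos hpos
    have hk : k ≠ 0 := fun hk => hne (hammingDist_eq_zero.1 (by omega))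
    obtain rfl : b = a := by omega
    subst hp
    rw [pairCount_self] at hcard'
    by_contra hd2
    have := centralBinom_mul_centralBinom_lt (s := k) (t := b) hk (by omega)
    omega

end CommonNbrs

lemma eq_of_forall_hammingDist_eq {x y : ι → ZMod 2} {p : ℕ}
    (hn : Fintype.card ι = 2 * p + 1) (h : ∀ w, hammingDist x w = p → hammingDist y w = p) :
    x = y := by
  classical
  have heq : commonNbrs p x y = commonNbrs p x x := by
    ext w
    simpa using h w
  have hcard : #(commonNbrs p x y) = pairCount 0 p (p + 1) := by
    rw [heq]
    exact card_commonNbrs (by simp) (by omega) (by omega)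
  obtain ⟨k, a, b, hd, rfl, hn', hcard'⟩ :=
    exists_of_card_commonNbrs_pos (hcard ▸ pairCount_pos ..)
  obtain rfl : b = a + 1 := by omega
  by_contra hne
  have hk : k ≠ 0 := fun hk => hne (hammingDist_eq_zero.1 (by omega))
  have := pairCount_lt_pairCount_zero hk a
  rw [add_comm a k] at this
  omega

section Balls

/-- The ball of radius `r` around `x` in the graph in which words at distance `2` are adjacent. -/
def evenBall (r : ℕ) (x y : ι → ZMod 2) : Prop :=
  Even (hammingDist x y) ∧ hammingDist x y ≤ 2 * r

/-- The ball of radius `r` around `x` in the graph in which words at distance `2` or at the even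
distance in `{n - 1, n}` are adjacent, where `n` is the dimension. -/
def foldedBall (r : ℕ) (x y : ι → ZMod 2) : Prop :=
  Even (hammingDist x y) ∧
    (hammingDist x y ≤ 2 * r ∨ Fintype.card ι + 1 ≤ hammingDist x y + 2 * r)

lemma evenBall_zero (x y : ι → ZMod 2) : evenBall 0 x y ↔ x = y := by
  rw [← hammingDist_eq_zero, evenBall, Nat.even_iff]
  omega

lemma evenBall_one (x y : ι → ZMod 2) : evenBall 1 x y ↔ x = y ∨ hammingDist x y = 2 := by
  rw [← hammingDist_eq_zero, evenBall, Nat.even_iff]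
  omega

lemma evenBall_succ (r : ℕ) (x y : ι → ZMod 2) :
    evenBall (r + 1) x y ↔ Relation.Comp (evenBall r) (evenBall 1) x y := by
  simp only [Relation.Comp, evenBall, Nat.even_iff]
  constructor
  · rintro ⟨heven, hle⟩
    by_cases h : 2 ≤ hammingDist x y
    · obtain ⟨z, hxz, hzy⟩ := exists_hammingDist_add_eq h
      exact ⟨z, by omega, by omega⟩
    · exact ⟨y, by omega, by simp⟩
  · rintro ⟨z, hxz, hzy⟩
    obtain ⟨t, -, hsum⟩ := exists_hammingDist_add_add_eq_two_mul x z y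
    have := hammingDist_triangle x z y
    omega

lemma foldedBall_zero (x y : ι → ZMod 2) : foldedBall 0 x y ↔ x = y := by
  have := hammingDist_le_card_fintype (x := x) (y := y)
  rw [← hammingDist_eq_zero, foldedBall, Nat.even_iff]
  omega

lemma foldedBall_succ (r : ℕ) (x y : ι → ZMod 2) :
    foldedBall (r + 1) x y ↔ Relation.Comp (foldedBall r) (foldedBall 1) x y := by
  simp only [Relation.Comp, foldedBall, Nat.even_iff]
  constructor
  · rintro ⟨heven, hnear | hfar⟩
    · by_cases h : 2 ≤ hammingDist x y
      · obtain ⟨z, hxz, hzy⟩ := exists_hammingDist_add_eq h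
        exact ⟨z, by omega, by omega⟩
      · exact ⟨y, by omega, by simp⟩
    · by_cases h : hammingDist x y + 2 ≤ Fintype.card ι
      · obtain ⟨z, hxz, hzy⟩ := exists_hammingDist_eq_add h
        exact ⟨z, by omega, by omega⟩
      · exact ⟨x, by simp, by omega⟩
  · rintro ⟨z, hxz, hzy⟩
    obtain ⟨t, ht, hsum⟩ := exists_hammingDist_add_add_eq_two_mul x z y
    have := hammingDist_triangle x z y
    have := hammingDist_triangle_left z y x
    have := hammingDist_triangle_right x z y
    omega

lemma foldedBall_one [DecidableEq ι] {a : ℕ} (hn : Fintype.card ι = 2 * a + 3)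
    (x y : ι → ZMod 2) :
    foldedBall 1 x y ↔ x = y ∨ #(commonNbrs (a + 1) x y) = pairCount 1 a (a + 1) := by
  have hle := hammingDist_le_card_fintype (x := x) (y := y)
  constructor
  · rintro ⟨heven, hdist⟩
    rw [Nat.even_iff] at heven
    obtain h | h | h :
        hammingDist x y = 0 ∨ hammingDist x y = 2 * 1 ∨ hammingDist x y = 2 * (a + 1) := by omega
    · exact .inl (hammingDist_eq_zero.1 h)
    · exact .inr (card_commonNbrs h (by omega) (by omega))
    · rw [← pairCount_succ_zero_one]
      exact .inr (card_commonNbrs h (by omega) (by omega))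
  · rintro (rfl | hcard)
    · simp [foldedBall]
    obtain ⟨k, a', b, hd, hp, hn', hcard'⟩ :=
      exists_of_card_commonNbrs_pos (hcard ▸ pairCount_pos ..)
    refine ⟨⟨k, by omega⟩, ?_⟩
    by_contra hmid
    obtain ⟨c, rfl⟩ := Nat.exists_eq_add_one_of_ne_zero (n := k) (by omega)
    obtain rfl : a = a' + c := by omega
    obtain rfl : b = a' + 1 := by omega
    have := pairCount_succ_lt_pairCount_one (a := a') (c := c) (by omega) (by omega)
    omega

end Balls

section PreservesDist

variable {φ : Equiv.Perm (ι → ZMod 2)} {p : ℕ}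

/-- The permutation `φ` of the cube preserves the distance `d` and maps no other distance to it. On
a finite cube, this is the notion of a `{d}`-isometry. -/
abbrev PreservesDist (φ : Equiv.Perm (ι → ZMod 2)) (d : ℕ) : Prop :=
  Preserves φ fun x y => hammingDist x y = d

lemma PreservesDist.hammingDist_eq (h : PreservesDist φ p) {x y : ι → ZMod 2}
    (hd : hammingDist x y = p) : hammingDist (φ x) (φ y) = hammingDist x y :=
  ((h x y).2 hd).trans hd.symm

lemma PreservesDist.card_commonNbrs [DecidableEq ι] (h : PreservesDist φ p) (x y : ι → ZMod 2) :
    #(commonNbrs p (φ x) (φ y)) = #(commonNbrs p x y) := by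
  refine (card_equiv φ fun z => ?_).symm
  simpa using (and_congr (h x z) (h y z)).symm

lemma PreservesDist.two (h : PreservesDist φ p) (hp : p ≠ 0) (hpn : p < Fintype.card ι)
    (hgap : 2 * p + 2 ≤ Fintype.card ι ∨ Fintype.card ι + 2 ≤ 2 * p) : PreservesDist φ 2 := by
  classical
  obtain ⟨a, rfl⟩ := Nat.exists_eq_add_one_of_ne_zero hp
  obtain ⟨b, hn⟩ : ∃ b, Fintype.card ι = a + b + 2 :=
    ⟨Fintype.card ι - a - 2, by omega⟩
  intro x y
  simp only [hammingDist_eq_two_iff hn (by omega), h.card_commonNbrs, ne_eq, φ.apply_eq_iff_eq]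

lemma PreservesDist.hammingDist_eq_of_even (h : PreservesDist φ 2) {x y : ι → ZMod 2}
    (heven : Even (hammingDist x y)) : hammingDist (φ x) (φ y) = hammingDist x y := by
  have hone : Preserves φ (evenBall 1) :=
    Preserves.congr (fun x y => or_congr (preserves_eq φ x y) (h x y)) evenBall_one
  have hball := Preserves.of_comp_one evenBall_zero evenBall_succ hone
  obtain ⟨r, hr⟩ := even_iff_two_dvd.1 heven
  obtain ⟨heven', hle⟩ := (hball r x y).2 ⟨heven, hr.le⟩
  obtain ⟨s, hs⟩ := even_iff_two_dvd.1 heven'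
  obtain ⟨-, hge⟩ := (hball s x y).1 ⟨heven', hs.le⟩
  omega

lemma PreservesDist.antipodal_of_card_eq_two_mul (h : PreservesDist φ p)
    (hn : Fintype.card ι = 2 * p) (hp : p ≠ 0) : PreservesDist φ (2 * p) := by
  classical
  intro x y
  simp only [hammingDist_eq_card_iff hn hp, h.card_commonNbrs, ne_eq, φ.apply_eq_iff_eq]

lemma PreservesDist.preserves_foldedBall (h : PreservesDist φ p) (hn : Fintype.card ι = 2 * p + 1)
    (hp : p ≠ 0) (r : ℕ) : Preserves φ (foldedBall r) := by
  classical
  obtain ⟨a, rfl⟩ := Nat.exists_eq_add_one_of_ne_zero hp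
  refine Preserves.of_comp_one foldedBall_zero foldedBall_succ (fun x y => ?_) r
  simp only [foldedBall_one (a := a) (by omega), h.card_commonNbrs, φ.apply_eq_iff_eq]

lemma PreservesDist.add_two_of_even (h : PreservesDist φ p) (hn : Fintype.card ι = 2 * p + 1)
    (hp : p ≠ 0) (heven : Even p) : PreservesDist φ (p + 2) := by
  obtain ⟨m, rfl⟩ := even_iff_two_dvd.1 heven
  have hiff : ∀ x y : ι → ZMod 2, hammingDist x y = 2 * m + 2 ↔
      foldedBall m x y ∧ ¬ foldedBall (m - 1) x y ∧
        ¬ hammingDist x y = 2 * m := by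
    intro x y
    simp only [foldedBall, Nat.even_iff]
    omega
  exact Preserves.congr (fun x y => and_congr (h.preserves_foldedBall hn hp m x y)
    (and_congr (not_congr (h.preserves_foldedBall hn hp (m - 1) x y)) (not_congr (h x y)))) hiff

lemma PreservesDist.add_one_of_odd (h : PreservesDist φ p) (hn : Fintype.card ι = 2 * p + 1)
    (hodd : Odd p) : PreservesDist φ (p + 1) := by
  obtain ⟨m, rfl⟩ := hodd
  have hiff : ∀ x y : ι → ZMod 2, hammingDist x y = 2 * m + 1 + 1 ↔
      foldedBall (m + 1) x y ∧ ¬ foldedBall m x y := by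
    intro x y
    simp only [foldedBall, Nat.even_iff]
    omega
  exact Preserves.congr (fun x y => and_congr (h.preserves_foldedBall hn (by omega) (m + 1) x y)
    (not_congr (h.preserves_foldedBall hn (by omega) m x y))) hiff

lemma hammingDist_eq_two_mul_add_one_iff (hn : Fintype.card ι = 2 * p + 1) (x y : ι → ZMod 2) :
    hammingDist x y = 2 * p + 1 ↔ ¬ Relation.Comp (fun x w => hammingDist x w = p)
      (fun w y => ¬ hammingDist w y = p + 1) x y := by
  simp only [Relation.Comp, not_exists, not_and, not_not]
  have hxy := hammingDist_add_one x y
  constructor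
  · intro hd w hxw
    obtain rfl : x = y + 1 := hammingDist_eq_zero.1 (by omega)
    have := hammingDist_add_one w y
    rw [hammingDist_comm w] at this
    omega
  · intro h
    have hsphere : ∀ w, hammingDist x w = p → hammingDist (y + 1) w = p := by
      intro w hxw
      have := h w hxw
      have := hammingDist_add_one w y
      rw [hammingDist_comm]
      omega
    rw [← eq_of_forall_hammingDist_eq hn hsphere, hammingDist_self] at hxy
    omega

lemma PreservesDist.antipodal_of_add_one (h : PreservesDist φ p) (h_succ : PreservesDist φ (p + 1))
    (hn : Fintype.card ι = 2 * p + 1) : PreservesDist φ (2 * p + 1) := by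
  have hcomp := h.comp (s := fun w y => ¬ hammingDist w y = p + 1)
    fun x y => not_congr (h_succ x y)
  exact Preserves.congr (fun x y => not_congr (hcomp x y)) (hammingDist_eq_two_mul_add_one_iff hn)

end PreservesDist

end BooleanCube

open BooleanCube

theorem weak_isometry_classification_general {ι : Type*} [Fintype ι] {n p : ℕ}
    (hn : Fintype.card ι = n) (hp : p ≠ 0) (hpn : p ≤ n) (φ : Equiv.Perm (ι → ZMod 2))
    (hφ : ∀ x y, hammingDist x y = p → hammingDist (φ x) (φ y) = p) :
    (∀ x y, Even (hammingDist x y) → hammingDist (φ x) (φ y) = hammingDist x y) ∨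
    (∀ x y, hammingDist x y = n → hammingDist (φ x) (φ y) = n) ∨
    (Even n ∧ ∀ x y, (hammingDist x y = n / 2 ∨ hammingDist x y = n) →
      hammingDist (φ x) (φ y) = hammingDist x y) ∨
    (Odd n ∧ ∀ x y, hammingDist x y = (n + 1) / 2 →
      hammingDist (φ x) (φ y) = hammingDist x y) ∨
    (Odd n ∧ ∀ x y,
      (hammingDist x y = (n - 1) / 2 ∨ hammingDist x y = (n + 1) / 2 ∨
        hammingDist x y = n) →
      hammingDist (φ x) (φ y) = hammingDist x y) := by
  have h : PreservesDist φ p := .of_forall_imp hφ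
  obtain rfl | rfl | hn1 | rfl | ⟨hlt, hgap⟩ : p = n ∨ n = 2 * p ∨ 2 * p = n + 1 ∨ n = 2 * p + 1 ∨
      p < n ∧ (2 * p + 2 ≤ n ∨ n + 2 ≤ 2 * p) := by omega
  · exact .inr (.inl hφ)
  · have h_anti := h.antipodal_of_card_eq_two_mul hn hp
    refine .inr (.inr (.inl ⟨even_two_mul p, fun x y hd => ?_⟩))
    exact hd.elim (fun hd => h.hammingDist_eq (by omega)) h_anti.hammingDist_eq
  · refine .inr (.inr (.inr (.inl ⟨⟨p - 1, by omega⟩, fun x y hd => ?_⟩)))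
    exact h.hammingDist_eq (by omega)
  · rcases p.even_or_odd with heven | hodd
    · have h_two := (h.add_two_of_even hn hp heven).two (by omega) (by grind) (by omega)
      exact .inl fun x y => h_two.hammingDist_eq_of_even
    · have h_succ := h.add_one_of_odd hn hodd
      have h_anti := h.antipodal_of_add_one h_succ hn
      refine .inr (.inr (.inr (.inr ⟨odd_two_mul_add_one p, fun x y hd => ?_⟩)))
      rcases hd with hd | hd | hd
      · exact h.hammingDist_eq (by omega)
      · exact h_succ.hammingDist_eq (by omega)
      · exact h_anti.hammingDist_eq hd
  · have h_two := h.two hp (by omega) (by omega)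
    exact .inl fun x y => h_two.hammingDist_eq_of_even

/-- Main Theorem: every weak isometry (`P`-isometry for a nonempty set `P` of distances)
of the Boolean cube `C_n` is an isometry, an even isometry, an `{n}`-isometry, an
`{n/2, n}`-isometry (for `n` even), an `{(n+1)/2}`-isometry (for `n` odd), or an
`{(n-1)/2, (n+1)/2, n}`-isometry (for `n` odd). -/
theorem weak_isometry_classification (n : ℕ) (hn : 1 ≤ n)
    (P : Set ℕ) (hP : P ⊆ Set.Icc 1 n) (hPne : P.Nonempty)
    (φ : (Fin n → ZMod 2) → Fin n → ZMod 2) (hbij : Function.Bijective φ)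
    (hφ : ∀ x y, hammingDist x y ∈ P → hammingDist (φ x) (φ y) = hammingDist x y) :
    (∀ x y, hammingDist (φ x) (φ y) = hammingDist x y) ∨
    (∀ x y, Even (hammingDist x y) → hammingDist (φ x) (φ y) = hammingDist x y) ∨
    (∀ x y, hammingDist x y = n → hammingDist (φ x) (φ y) = n) ∨
    (Even n ∧ ∀ x y, (hammingDist x y = n / 2 ∨ hammingDist x y = n) →
      hammingDist (φ x) (φ y) = hammingDist x y) ∨
    (Odd n ∧ ∀ x y, hammingDist x y = (n + 1) / 2 →
      hammingDist (φ x) (φ y) = hammingDist x y) ∨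
    (Odd n ∧ ∀ x y,
      (hammingDist x y = (n - 1) / 2 ∨ hammingDist x y = (n + 1) / 2 ∨
        hammingDist x y = n) →
      hammingDist (φ x) (φ y) = hammingDist x y) := by
  obtain ⟨p, hpP⟩ := hPne
  obtain ⟨hp, hpn⟩ := hP hpP
  exact .inr <| weak_isometry_classification_general (Fintype.card_fin n) (by omega) hpn
    (.ofBijective φ hbij) fun x y hd => (hφ x y (hd ▸ hpP)).trans hd
end

section
/- Let 1 ≤ p ≤ n−1. Every {p, n−p}-isometry of C_n is a {p, n−p, n}-isometry; that is, if a bijection φ of C_n preserves the distances p and n−p, then φ also preserves the distance n. -/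
/-!
Let `x` and `y` be antipodal, that is, at distance `n`. Over a two-letter alphabet the distances of
any word to `x` and to `y` add up to `n`, so the sphere of radius `p` about `y` is the sphere of
radius `n - p` about `x`. By finiteness `φ` also reflects the distance `p`. Hence the sphere of
radius `p` about `φ y` is contained in the sphere of radius `n - p` about `φ x`, which is the sphere
of radius `p` about the antipode of `φ x`. For `0 < p < n` such an inclusion forces the two centres
to be equal or antipodal; they are not antipodal, as `φ` is injective, so `φ y` is the antipode
of `φ x`.
-/

open Function

theorem rel_map_iff_of_injective {α : Type*} [Finite α] {r : α → α → Prop} {f : α → α}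
    (hf : Injective f) (hr : ∀ x y, r x y → r (f x) (f y)) {x y : α} :
    r (f x) (f y) ↔ r x y := by
  refine ⟨fun hxy ↦ ?_, hr x y⟩
  let s : Set (α × α) := {q | r q.1 q.2}
  have hmaps : Set.MapsTo (Prod.map f f) s s := fun q hq ↦ hr q.1 q.2 hq
  have hbij : Set.BijOn (Prod.map f f) s s :=
    (s.toFinite.injOn_iff_bijOn_of_mapsTo hmaps).mp (hf.prodMap hf).injOn
  obtain ⟨q, hq, hqxy⟩ := hbij.surjOn (show (f x, f y) ∈ s from hxy)
  obtain rfl : q = (x, y) := hf.prodMap hf hqxy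
  exact hq

theorem ne_iff_eq_of_card_eq_two {α : Type*} (hα : Nat.card α = 2) {a b c : α} (hab : a ≠ b) :
    c ≠ a ↔ c = b :=
  ⟨fun hca ↦ ((Nat.card_eq_two_iff' a).mp hα).unique hca hab.symm,
    fun hcb ↦ hcb ▸ hab.symm⟩

theorem exists_forall_ne_iff_mem {ι : Type*} {β : ι → Type*} [∀ i, Nontrivial (β i)]
    (x : ∀ i, β i) (s : Set ι) : ∃ y : ∀ i, β i, ∀ i, x i ≠ y i ↔ i ∈ s := by
  classical
  choose c hc using fun i ↦ exists_ne (x i)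
  refine ⟨s.piecewise c x, fun i ↦ ?_⟩
  by_cases hi : i ∈ s <;> simp [hi, (hc i).symm]

section HammingDist

variable {ι : Type*} [Fintype ι] {β : ι → Type*} [∀ i, DecidableEq (β i)]

theorem hammingDist_eq_card_iff {x y : ∀ i, β i} :
    hammingDist x y = Fintype.card ι ↔ ∀ i, x i ≠ y i := by
  simp [hammingDist, ← Finset.card_univ, Finset.card_filter_eq_iff]

theorem hammingDist_update_of_eq_of_ne [DecidableEq ι] {x y : ∀ i, β i} {i : ι} {a : β i}
    (hxy : x i = y i) (hxa : x i ≠ a) : hammingDist x (update y i a) = hammingDist x y + 1 := by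
  have hinsert : ({k | x k ≠ update y i a k} : Finset ι) =
      insert i ({k | x k ≠ y k} : Finset ι) := by
    ext k
    obtain rfl | hk := eq_or_ne k i 
    · simp [hxa]
    · simp [hk]
  rw [hammingDist, hinsert, Finset.card_insert_of_notMem (by simp [hxy]), hammingDist]

theorem hammingDist_update_self_add_one [DecidableEq ι] {x y : ∀ i, β i} {i : ι}
    (hxy : x i ≠ y i) : hammingDist x (update y i (x i)) + 1 = hammingDist x y := by
  have hself : x i = update y i (x i) i := (update_self ..).symm
  simpa using (hammingDist_update_of_eq_of_ne hself hxy).symm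

section Nontrivial

variable [∀ i, Nontrivial (β i)]

theorem exists_hammingDist_eq_card (x : ∀ i, β i) :
    ∃ y : ∀ i, β i, hammingDist x y = Fintype.card ι := by
  obtain ⟨y, hy⟩ := exists_forall_ne_iff_mem x Set.univ
  exact ⟨y, hammingDist_eq_card_iff.mpr fun i ↦ (hy i).mpr (Set.mem_univ i)⟩

theorem exists_hammingDist_eq_of_add_two_le (x : ∀ i, β i) (i j : ι) {m : ℕ}
    (hm : m + 2 ≤ Fintype.card ι) :
    ∃ y : ∀ i, β i, hammingDist x y = m ∧ x i = y i ∧ x j = y j := by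
  classical
  have hcard : m ≤ ({i, j}ᶜ : Finset ι).card := by
    rw [Finset.card_compl]
    have := Finset.card_le_two (a := i) (b := j)
    omega
  obtain ⟨s, hs, rfl⟩ := Finset.exists_subset_card_eq hcard
  obtain ⟨y, hy⟩ := exists_forall_ne_iff_mem x (s : Set ι)
  have hagree {k : ι} (hk : k ∈ ({i, j} : Finset ι)) : x k = y k :=
    not_not.mp <| (hy k).not.mpr fun hks ↦ Finset.mem_compl.mp (hs hks) hk
  exact ⟨y, by simp [hammingDist, hy], hagree (by simp), hagree (by simp)⟩

theorem eq_or_hammingDist_eq_card_of_sphere_subset {u v : ∀ i, β i} {p : ℕ} (hp₀ : 0 < p)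
    (hp : p < Fintype.card ι) (h : ∀ z, hammingDist u z = p → hammingDist v z = p) :
    u = v ∨ hammingDist u v = Fintype.card ι := by
  classical
  by_contra! ⟨hne, hcard⟩
  obtain ⟨j, hj⟩ := ne_iff.mp hne
  obtain ⟨i, hi⟩ : ∃ i, u i = v i := by simpa [hammingDist_eq_card_iff] using hcard
  -- Changing `b` at `i` or at `j` lands on the sphere about `u`, but the first change moves
  -- away from `v` while the second moves towards `v`.
  obtain ⟨b, hb, hbi, hbj⟩ :=
    exists_hammingDist_eq_of_add_two_le u i j (m := p - 1) (by omega)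
  obtain ⟨a, ha⟩ := exists_ne (u i)
  have hi_sphere : hammingDist v (update b i a) = p := by
    apply h
    rw [hammingDist_update_of_eq_of_ne hbi ha.symm]
    omega
  have hj_sphere : hammingDist v (update b j (v j)) = p := by
    apply h
    rw [hammingDist_update_of_eq_of_ne hbj hj]
    omega
  have hi_away : hammingDist v (update b i a) = hammingDist v b + 1 :=
    hammingDist_update_of_eq_of_ne (hi.symm.trans hbi) (hi ▸ ha.symm)
  have hj_towards : hammingDist v (update b j (v j)) + 1 = hammingDist v b :=
    hammingDist_update_self_add_one (hbj ▸ hj.symm)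
  omega

end Nontrivial

theorem hammingDist_add_hammingDist_of_eq_card (hβ : ∀ i, Nat.card (β i) = 2) {x y : ∀ i, β i}
    (hxy : hammingDist x y = Fintype.card ι) (z : ∀ i, β i) :
    hammingDist x z + hammingDist y z = Fintype.card ι := by
  have hcompl (i : ι) : y i ≠ z i ↔ ¬x i ≠ z i := by
    rw [not_not, ne_comm, eq_comm]
    exact ne_iff_eq_of_card_eq_two (hβ i) (hammingDist_eq_card_iff.mp hxy i).symm
  simp only [hammingDist, hcompl]
  exact Finset.card_filter_add_card_filter_not _

theorem pnpIsometry_preserves_n_general (hβ : ∀ i, Nat.card (β i) = 2) {p : ℕ} (hp₀ : 0 < p)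
    (hp_lt : p < Fintype.card ι) {φ : (∀ i, β i) → ∀ i, β i} (hφ : Injective φ)
    (hp : ∀ x y, hammingDist x y = p → hammingDist (φ x) (φ y) = p)
    (hq : ∀ x y, hammingDist x y = Fintype.card ι - p →
      hammingDist (φ x) (φ y) = Fintype.card ι - p)
    (x y : ∀ i, β i) (hxy : hammingDist x y = Fintype.card ι) :
    hammingDist (φ x) (φ y) = Fintype.card ι := by
  have (i : ι) : Finite (β i) := Nat.finite_of_card_ne_zero (by simp [hβ i])
  have (i : ι) : Nontrivial (β i) := Finite.one_lt_card_iff_nontrivial.mp (by simp [hβ i])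
  obtain ⟨x', hx'⟩ := exists_hammingDist_eq_card (φ x)
  have hsphere (z : ∀ i, β i) (hz : hammingDist (φ y) z = p) : hammingDist x' z = p := by
    obtain ⟨w, rfl⟩ := Finite.surjective_of_injective hφ z
    have hyw : hammingDist y w = p :=
      (rel_map_iff_of_injective (r := fun u v ↦ hammingDist u v = p) hφ hp).mp hz
    have hxw := hammingDist_add_hammingDist_of_eq_card hβ hxy w
    have hφxw := hq x w (by omega)
    have hx'w := hammingDist_add_hammingDist_of_eq_card hβ hx' (φ w)
    omega
  obtain heq | hanti := eq_or_hammingDist_eq_card_of_sphere_subset hp₀ hp_lt hsphere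
  · rwa [heq]
  · have hsum := hammingDist_add_hammingDist_of_eq_card hβ hx' (φ y)
    rw [hammingDist_comm x', hanti] at hsum
    have hφxy : φ x = φ y := hammingDist_eq_zero.mp (by omega)
    rw [hφ hφxy, hammingDist_self] at hxy
    omega

end HammingDist

/-- Every `{p, n-p}`-isometry of the Boolean cube `C_n` (with `1 ≤ p ≤ n-1`) is a
`{p, n-p, n}`-isometry: it also preserves the distance `n`. -/
theorem pnpIsometry_preserves_n (n p : ℕ) (hp1 : 1 ≤ p) (hpn : p < n)
    (φ : (Fin n → ZMod 2) → Fin n → ZMod 2) (hbij : Function.Bijective φ)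
    (hp : ∀ x y, hammingDist x y = p → hammingDist (φ x) (φ y) = p)
    (hq : ∀ x y, hammingDist x y = n - p → hammingDist (φ x) (φ y) = n - p) :
    ∀ x y, hammingDist x y = n → hammingDist (φ x) (φ y) = n := by
  simpa using pnpIsometry_preserves_n_general (fun _ ↦ Nat.card_zmod 2) hp1 (by simpa using hpn)
    hbij.injective hp (by simpa using hq)
end
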